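/- Let μ be an idempotent measure on a compact Hausdorff space X, and define its density d_μ: X → [-∞,0] by d_μ(x) = inf{μ(φ) : φ ∈ C(X), φ ≤ 0, φ(x) = 0}. Then d_μ is upper semicontinuous and sup_{x∈X} d_μ(x) = 0. -/

import Mathlib

open Topology

noncomputable section

def IsIdempotentMeasure {Z : Type*} [TopologicalSpace Z] (μ : C(Z, ℝ) → ℝ) : Prop :=
  μ 1 = 1 ∧ (∀ (c : ℝ) (φ : C(Z, ℝ)), μ (ContinuousMap.const Z c + φ) = c + μ φ) ∧
    ∀ φ ψ : C(Z, ℝ), μ (φ ⊔ ψ) = max (μ φ) (μ ψ)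

abbrev IM (Z : Type*) [TopologicalSpace Z] : Type _ :=
  {μ : C(Z, ℝ) → ℝ // IsIdempotentMeasure μ}

def density {Z : Type*} [TopologicalSpace Z] (μ : C(Z, ℝ) → ℝ) (z : Z) : EReal :=
  ⨅ φ : {φ : C(Z, ℝ) // φ ≤ 0 ∧ φ z = 0}, ((μ φ.1 : ℝ) : EReal)

def pushforward {X Y : Type*} [TopologicalSpace X] [TopologicalSpace Y]
    (f : C(X, Y)) (μ : C(X, ℝ) → ℝ) : C(Y, ℝ) → ℝ :=
  fun ψ => μ (ψ.comp f)

def mpComb {τ : Type*} (α : EReal) (a b : τ → ℝ) : τ → ℝ :=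
  fun t => ((α + (a t : EReal)) ⊔ ((b t : ℝ) : EReal)).toReal

def MaxPlusConvex {τ : Type*} (A : Set (τ → ℝ)) : Prop :=
  ∀ a ∈ A, ∀ b ∈ A, ∀ α : EReal, α ≤ 0 → mpComb α a b ∈ A

def projCM {T : Type*} (A : Set (T → ℝ)) (t : T) : C(A, ℝ) :=
  ⟨fun a => a.1 t, (continuous_apply t).comp continuous_subtype_val⟩

def tilde {Z : Type*} [TopologicalSpace Z] (φ : C(Z, ℝ)) : C(IM Z, ℝ) :=
  ⟨fun ν => ν.1 φ, (continuous_apply φ).comp continuous_subtype_val⟩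

/-!
Truncating `φ - φ x` at `0` shows that the density at `x` is also the infimum of `μ φ - φ x` over
*all* `φ`; as an infimum of continuous functions of `x` it is upper semicontinuous. If the density
were negative everywhere, each point would have a neighbourhood on which some `ψ` with `μ ψ < 0` is
positive. By compactness finitely many of these `ψ` have a positive maximum on `X`, yet `μ` maps
this maximum to the maximum of the negative numbers `μ ψ`, against monotonicity.
-/

namespace IsIdempotentMeasure

variable {X : Type*} [TopologicalSpace X] {μ : C(X, ℝ) → ℝ}

theorem map_const_add (hμ : IsIdempotentMeasure μ) (c : ℝ) (φ : C(X, ℝ)) :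
    μ (.const X c + φ) = c + μ φ :=
  hμ.2.1 c φ

theorem map_sup (hμ : IsIdempotentMeasure μ) (φ ψ : C(X, ℝ)) : μ (φ ⊔ ψ) = μ φ ⊔ μ ψ :=
  hμ.2.2 φ ψ

theorem monotone (hμ : IsIdempotentMeasure μ) : Monotone μ := fun φ ψ h => by
  rw [← sup_eq_right, ← hμ.map_sup, sup_eq_right.mpr h]

theorem map_const (hμ : IsIdempotentMeasure μ) (c : ℝ) : μ (.const X c) = c := by
  have h : ContinuousMap.const X c = .const X (c - 1) + 1 := by ext; simp
  rw [h, hμ.map_const_add, hμ.1, sub_add_cancel]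

theorem map_zero (hμ : IsIdempotentMeasure μ) : μ 0 = 0 :=
  hμ.map_const 0

theorem density_le_map_sub (hμ : IsIdempotentMeasure μ) (φ : C(X, ℝ)) (x : X) :
    density μ x ≤ ((μ φ - φ x : ℝ) : EReal) := by
  let ψ : C(X, ℝ) := (.const X (-φ x) + φ) ⊓ 0
  have hψ : ψ ≤ 0 ∧ ψ x = 0 := ⟨inf_le_right, by simp [ψ]⟩
  have hμψ : μ ψ ≤ μ φ - φ x :=
    calc μ ψ ≤ μ (.const X (-φ x) + φ) := hμ.monotone inf_le_left
      _ = μ φ - φ x := by rw [hμ.map_const_add, neg_add_eq_sub]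
  exact iInf_le_of_le ⟨ψ, hψ⟩ (EReal.coe_le_coe hμψ)

theorem density_eq_iInf (hμ : IsIdempotentMeasure μ) (x : X) :
    density μ x = ⨅ φ : C(X, ℝ), ((μ φ - φ x : ℝ) : EReal) :=
  le_antisymm (le_iInf fun φ => hμ.density_le_map_sub φ x) <|
    le_iInf fun ⟨φ, _, hφx⟩ => iInf_le_of_le φ (by simp only [hφx, sub_zero, le_refl])

theorem upperSemicontinuous_density (hμ : IsIdempotentMeasure μ) :
    UpperSemicontinuous (density μ) := by
  rw [funext hμ.density_eq_iInf]
  refine upperSemicontinuous_iInf fun φ => Continuous.upperSemicontinuous ?_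
  exact continuous_coe_real_ereal.comp (continuous_const.sub φ.continuous)

theorem density_nonpos (hμ : IsIdempotentMeasure μ) (x : X) : density μ x ≤ 0 := by
  simpa [hμ.map_zero] using hμ.density_le_map_sub 0 x

theorem map_lt_of_forall_exists_lt [CompactSpace X] (hμ : IsIdempotentMeasure μ) {φ : C(X, ℝ)}
    {a : ℝ} (h : ∀ x, ∃ ψ : C(X, ℝ), φ x < ψ x ∧ μ ψ < a) : μ φ < a := by
  obtain ⟨ψ, hφψ, hψ⟩ : ∃ ψ : C(X, ℝ), (∀ x ∈ Set.univ, φ x ≤ ψ x) ∧ μ ψ < a := by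
    refine isCompact_univ.induction_on
      (p := fun s => ∃ ψ : C(X, ℝ), (∀ x ∈ s, φ x ≤ ψ x) ∧ μ ψ < a) ?empty ?mono ?union ?nhds
    case empty => exact ⟨.const X (a - 1), by simp, by rw [hμ.map_const]; exact sub_one_lt a⟩
    case mono => exact fun s t hst ⟨ψ, hφψ, hψ⟩ => ⟨ψ, fun x hx => hφψ x (hst hx), hψ⟩
    case union =>
      rintro s t ⟨ψ, hφψ, hψ⟩ ⟨χ, hφχ, hχ⟩
      refine ⟨ψ ⊔ χ, ?_, by rw [hμ.map_sup]; exact max_lt hψ hχ⟩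
      rintro x (hx | hx)
      · exact le_sup_of_le_left (hφψ x hx)
      · exact le_sup_of_le_right (hφχ x hx)
    case nhds =>
      intro x _
      obtain ⟨ψ, hφψx, hψ⟩ := h x
      have hφψ : ∀ᶠ y in 𝓝 x, φ y < ψ y :=
        φ.continuous.continuousAt.eventually_lt ψ.continuous.continuousAt hφψx
      exact ⟨{y | φ y < ψ y}, mem_nhdsWithin_of_mem_nhds hφψ, ψ, fun _ hy => le_of_lt hy, hψ⟩
  exact (hμ.monotone fun x => hφψ x (Set.mem_univ x)).trans_lt hψ

theorem exists_map_sub_le_density [CompactSpace X] (hμ : IsIdempotentMeasure μ) (φ : C(X, ℝ)) :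
    ∃ x, ((μ φ - φ x : ℝ) : EReal) ≤ density μ x := by
  by_contra! h
  refine lt_irrefl (μ φ) (hμ.map_lt_of_forall_exists_lt fun x => ?_)
  obtain ⟨ψ, hψ⟩ : ∃ ψ : C(X, ℝ), ((μ ψ - ψ x : ℝ) : EReal) < (μ φ - φ x : ℝ) := by
    simpa only [hμ.density_eq_iInf, iInf_lt_iff] using h x
  have hgap : φ x - ψ x < μ φ - μ ψ := by linarith [EReal.coe_lt_coe_iff.mp hψ]
  obtain ⟨c, hφc, hcμ⟩ := exists_between hgap
  refine ⟨.const X c + ψ, sub_lt_iff_lt_add.mp hφc, ?_⟩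
  rw [hμ.map_const_add]
  exact lt_sub_iff_add_lt.mp hcμ

theorem exists_density_eq_zero [CompactSpace X] (hμ : IsIdempotentMeasure μ) :
    ∃ x, density μ x = 0 := by
  obtain ⟨x, hx⟩ := hμ.exists_map_sub_le_density 0
  exact ⟨x, (hμ.density_nonpos x).antisymm (by simpa [hμ.map_zero] using hx)⟩

end IsIdempotentMeasure

theorem density_usc_and_sup_zero_general {X : Type*} [TopologicalSpace X] [CompactSpace X]
    (μ : C(X, ℝ) → ℝ) (hμ : IsIdempotentMeasure μ) :
    UpperSemicontinuous (density μ) ∧ (∀ x, density μ x ≤ 0) ∧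
      (⨆ x : X, density μ x) = 0 := by
  obtain ⟨x, hx⟩ := hμ.exists_density_eq_zero
  exact ⟨hμ.upperSemicontinuous_density, hμ.density_nonpos,
    (iSup_le hμ.density_nonpos).antisymm (hx ▸ le_iSup (density μ) x)⟩

theorem density_usc_and_sup_zero {X : Type*} [TopologicalSpace X] [CompactSpace X]
    [T2Space X] (μ : C(X, ℝ) → ℝ) (hμ : IsIdempotentMeasure μ) :
    UpperSemicontinuous (density μ) ∧ (∀ x, density μ x ≤ 0) ∧
      (⨆ x : X, density μ x) = 0 :=
  density_usc_and_sup_zero_general μ hμ
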